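/- Let p be an odd prime and k a field of characteristic p. Let G ≤ S_{2p} be the group generated by σ₁, σ₂, λ₁, and ρ₁ρ₂ (where a generates (ℤ/pℤ)^×), acting on the rational function field k(x₀,…,x_{p-1},y₀,…,y_{p-1}) by permuting variables: σ₁: x_i ↦ x_{i+1}; σ₂: y_i ↦ y_{i+1}; λ₁: x_i ↦ y_{-i}, y_i ↦ x_i; ρ₁ρ₂: x_i ↦ x_{ai}, y_i ↦ y_{ai} (indices mod p). Then the fixed field k(x₀,…,x_{p-1},y₀,…,y_{p-1})^G is purely transcendental over k. -/

import Mathlib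

set_option maxHeartbeats 1000000
set_option synthInstance.maxHeartbeats 400000

open Sum

/-- A field extension `F` of `k` is `k`-rational (purely transcendental over `k`)
if it is `k`-isomorphic to a rational function field in finitely many variables. -/
def IsKRational (k F : Type*) [Field k] [Field F] [Algebra k F] : Prop :=
  ∃ n : ℕ, Nonempty (F ≃ₐ[k] FractionRing (MvPolynomial (Fin n) k))

/-!
Regard `x` and `y` as weights on the finite field `F = ℤ/p`. The mean `s` of `x` and its central
moments of degree `m < p`, `m ≠ 1`, generate the same field as the weights, because
`∑ i, (i - j) ^ (p - 1) * x i = ∑ i, x i - x j`; likewise for `y` with mean `t`. An affine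
reindexing of the weights acts affinely on the means and multiplies the moments by scalars, so
`S = s ^ p - s` and `T = t ^ p - t` change by a scalar, and dividing the moments by powers of `S`
and `T` gives invariants `C` and `D` of the translations and of the dilation. The swap exchanges
`C` and `D` and sends `r = S / T` to `-r⁻¹`, so the traces of `C` and of `r * C`, together with
`r - r⁻¹` and `(S ^ 2 + T ^ 2) ^ e`, where `2 * e` is the order of `a`, are invariant under `G`.

The whole field is reached from these `2 * p` elements by adjoining `r`, `T`, `s`, `t`, which
satisfy a quadratic, a Kummer and two Artin–Schreier equations. Hence the elements are algebraically
independent, and since at every stage one of the four automorphisms moves the adjoined element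
through as many conjugates as the degree of its equation, an element fixed by `G` descends all the
way to the field they generate. If `a` has odd order, the composite of the dilation with the square
of the swap is the dilation by `-a`, which has even order.
-/

section AlgebraicIndependence

open IntermediateField Polynomial

variable {k K ι : Type*} [Field k] [Field K] [Algebra k K]

theorem isKRational_adjoin_range [Finite ι] {g : ι → K} (hg : AlgebraicIndependent k g) :
    IsKRational k (adjoin k (Set.range g)) := by
  obtain ⟨n, ⟨e⟩⟩ := Finite.exists_equiv_fin ι
  rw [← e.symm.surjective.range_comp g]
  exact ⟨n, ⟨(hg.comp _ e.symm.injective).aevalEquivField.symm⟩⟩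

open IntermediateField.algebraAdjoinAdjoin in
theorem algebraicIndependent_of_isAlgebraic_adjoin_range [Finite ι] {x g : ι → K}
    (hx : AlgebraicIndependent k x) [Algebra.IsAlgebraic (adjoin k (Set.range g)) K] :
    AlgebraicIndependent k g := by
  have : Algebra.IsAlgebraic (Algebra.adjoin k (Set.range g)) K :=
    (IsFractionRing.comap_isAlgebraic_iff (K := adjoin k (Set.range g))).2 inferInstance
  exact (Algebra.IsAlgebraic.isTranscendenceBasis_of_lift_le_trdeg_of_finite k g
    hx.lift_cardinalMk_le_trdeg).1

theorem sum_ne_zero_of_algebraicIndependent [Fintype ι] [Nonempty ι] {x : ι → K}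
    (hx : AlgebraicIndependent k x) : ∑ i, x i ≠ 0 := fun h =>
  one_ne_zero <| Fintype.linearIndependent_iff.1 hx.linearIndependent (fun _ => (1 : k))
    (by simpa using h) (Classical.arbitrary ι)

theorem pow_sub_self_ne_zero {u : K} (hu : Transcendental k u) {n : ℕ} (hn : 1 < n) :
    u ^ n - u ≠ 0 := fun h =>
  FiniteField.X_pow_card_sub_X_ne_zero k hn <|
    (transcendental_iff.1 hu) _ (by simpa using h)

theorem pow_sub_self_sq_add_sq_ne_zero {u v : K} (h : AlgebraicIndependent k ![u, v]) {n : ℕ}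
    (hn : 1 < n) : (u ^ n - u) ^ 2 + (v ^ n - v) ^ 2 ≠ 0 := by
  intro h0
  let P : MvPolynomial (Fin 2) k :=
    (.X 0 ^ n - .X 0) ^ 2 + (.X 1 ^ n - .X 1) ^ 2
  have hP : P = 0 := h.eq_zero_of_aeval_eq_zero P (by simpa [P] using h0)
  have hspec : MvPolynomial.aeval ![(X : k[X]), 0] P = (X ^ n - X) ^ 2 := by
    simp [P, (Nat.zero_lt_of_lt hn).ne']
  rw [hP, map_zero] at hspec
  exact pow_ne_zero 2 (FiniteField.X_pow_card_sub_X_ne_zero k hn) hspec.symm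

variable (k K) in
theorem algebraicIndependent_algebraMap_X [Algebra (MvPolynomial ι k) K]
    [IsScalarTower k (MvPolynomial ι k) K] [IsFractionRing (MvPolynomial ι k) K] :
    AlgebraicIndependent k fun i : ι => algebraMap (MvPolynomial ι k) K (.X i) :=
  (MvPolynomial.algebraicIndependent_X ι k).map' (f := IsScalarTower.toAlgHom k _ K)
    (IsFractionRing.injective _ _)

variable (k K) in
theorem adjoin_range_algebraMap_X_eq_top [Algebra (MvPolynomial ι k) K]
    [IsScalarTower k (MvPolynomial ι k) K] [IsFractionRing (MvPolynomial ι k) K] :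
    adjoin k (Set.range fun i : ι => algebraMap (MvPolynomial ι k) K (.X i)) = ⊤ := by
  set E := adjoin k (Set.range fun i : ι => algebraMap (MvPolynomial ι k) K (.X i))
  have hpoly (P : MvPolynomial ι k) : algebraMap _ K P ∈ E := by
    have hP : algebraMap _ K P =
        MvPolynomial.aeval (fun i => algebraMap (MvPolynomial ι k) K (.X i)) P := by
      simpa [Function.comp_def] using
        (MvPolynomial.aeval_algebraMap_apply K (MvPolynomial.X (R := k)) P).symm
    rw [hP]
    refine algebra_adjoin_le_adjoin k _ ?_
    rw [Algebra.adjoin_range_eq_range_aeval]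
    exact ⟨P, rfl⟩
  refine top_unique fun z _ => ?_
  obtain ⟨P, Q, _, rfl⟩ := IsFractionRing.div_surjective (A := MvPolynomial ι k) z
  exact div_mem (hpoly P) (hpoly Q)

end AlgebraicIndependence

section Descent

open IntermediateField Polynomial

variable {k K : Type*} [Field k] [Field K] [Algebra k K]

theorem mem_fixedField_closure_iff {S : Set Gal(K/k)} {z : K} :
    z ∈ fixedField (Subgroup.closure S) ↔ ∀ τ ∈ S, τ z = z := by
  rw [mem_fixedField_iff]
  exact Subgroup.closure_le (MulAction.stabilizer Gal(K/k) z)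

theorem isIntegral_and_natDegree_minpoly_le {α : K} {b c : k} {n : ℕ} (hn : 2 ≤ n)
    (h : α ^ n = algebraMap k K b * α + algebraMap k K c) :
    IsIntegral k α ∧ (minpoly k α).natDegree ≤ n := by
  have hdeg : (C b * X + C c).natDegree < n := natDegree_linear_le.trans_lt hn
  have hmonic : (X ^ n - (C b * X + C c)).Monic :=
    monic_X_pow_sub (degree_linear_le.trans_lt (by exact_mod_cast hn))
  have hroot : aeval α (X ^ n - (C b * X + C c)) = 0 := by simp [h]
  refine ⟨⟨_, hmonic, hroot⟩,
    (natDegree_le_of_dvd (minpoly.dvd k α hroot) hmonic.ne_zero).trans ?_⟩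
  exact (natDegree_sub_le _ _).trans (max_le (natDegree_X_pow_le n) hdeg.le)

theorem mem_algebraicClosure_of_pow_eq {α b c : K} {n : ℕ} (hn : 2 ≤ n)
    (hb : b ∈ algebraicClosure k K) (hc : c ∈ algebraicClosure k K) (h : α ^ n = b * α + c) :
    α ∈ algebraicClosure k K := by
  have hα : IsIntegral (algebraicClosure k K) α :=
    (isIntegral_and_natDegree_minpoly_le (b := ⟨b, hb⟩) (c := ⟨c, hc⟩) hn h).1
  exact mem_algebraicClosure_iff'.2 (isIntegral_trans α hα)

theorem apply_eq_of_mem_adjoin {A : Set K} {τ : Gal(K/k)} (hA : ∀ y ∈ A, τ y = y) {z : K}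
    (hz : z ∈ adjoin k A) : τ z = z := by
  have hle : adjoin k A ≤ fixedField (Subgroup.closure {τ}) :=
    adjoin_le_iff.2 fun y hy => mem_fixedField_closure_iff.2 (by simpa using hA y hy)
  exact mem_fixedField_closure_iff.1 (hle hz) τ rfl

-- A polynomial `f` of degree `< n` over `k(A)` with `f(α) = z` takes the value `z` at the
-- `n` points `τ ^ i α`, so it is the constant `z`.
theorem mem_adjoin_of_mem_adjoin_insert {A : Set K} {α z : K} {n : ℕ}
    (hαint : IsIntegral (adjoin k A) α) (hdeg : (minpoly (adjoin k A) α).natDegree ≤ n)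
    {τ : Gal(K/k)} (hA : ∀ y ∈ A, τ y = y) (hα : Set.InjOn (fun i => (τ ^ i) α) (Set.Iio n))
    (hz : z ∈ adjoin k (insert α A)) (hτz : τ z = z) : z ∈ adjoin k A := by
  set E := adjoin k A
  have hpow {y : K} (hy : τ y = y) (i : ℕ) : (τ ^ i) y = y :=
    pow_mem (S := MulAction.stabilizer Gal(K/k) y) (show τ ∈ _ from hy) i
  obtain ⟨f, hf, hfz⟩ : ∃ f : E[X], f.natDegree < n ∧ aeval α f = z := by
    have hz' : z ∈ E⟮α⟯ := by
      rwa [Set.insert_eq, Set.union_comm, ← adjoin_adjoin_left] at hz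
    obtain ⟨f, hf, hfz⟩ := (adjoin.powerBasis hαint).exists_eq_aeval ⟨z, hz'⟩
    rw [adjoin.powerBasis_dim] at hf
    refine ⟨f, hf.trans_le hdeg, ?_⟩
    simpa using (congrArg (algebraMap E⟮α⟯ K) hfz).symm
  have hconj (i : ℕ) : aeval ((τ ^ i) α) f = z := by
    calc aeval ((τ ^ i) α) f = (τ ^ i) (aeval α f) := by
          simp only [aeval_eq_sum_range, map_sum, Algebra.smul_def, map_mul, map_pow]
          refine Finset.sum_congr rfl fun m _ => ?_
          rw [IntermediateField.algebraMap_apply,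
            hpow (apply_eq_of_mem_adjoin hA (f.coeff m).2) i]
      _ = z := by rw [hfz, hpow hτz]
  have hconst : f.map (algebraMap E K) - C z = 0 := by
    refine eq_zero_of_natDegree_lt_card_of_eval_eq_zero _
      (f := fun i : Fin n => (τ ^ (i : ℕ)) α)
      (fun i j hij => Fin.ext (hα i.2 j.2 hij)) (fun i => ?_) ?_
    · rw [eval_sub, eval_C, eval_map_algebraMap, hconj, sub_self]
    · simpa using hf
  have hcoeff : algebraMap E K (f.coeff 0) = z := by
    simpa using congrArg (coeff · 0) (sub_eq_zero.1 hconst)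
  exact hcoeff ▸ (f.coeff 0).2

theorem mem_adjoin_of_quadratic {A : Set K} {α b c z : K}
    (hb : b ∈ adjoin k A) (hc : c ∈ adjoin k A) (h : α ^ 2 = b * α + c)
    {τ : Gal(K/k)} (hA : ∀ y ∈ A, τ y = y) (hα : τ α ≠ α)
    (hz : z ∈ adjoin k (insert α A)) (hτz : τ z = z) : z ∈ adjoin k A := by
  obtain ⟨hαint, hdeg⟩ := isIntegral_and_natDegree_minpoly_le (k := adjoin k A)
    (b := ⟨b, hb⟩) (c := ⟨c, hc⟩) le_rfl h
  refine mem_adjoin_of_mem_adjoin_insert hαint hdeg hA ?_ hz hτz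
  rintro (_ | _ | i) hi (_ | _ | j) hj hij
  all_goals simp_all [eq_comm]

theorem mem_adjoin_of_kummer {A : Set K} {α c z : K} {ζ : k} {n : ℕ} (hn : 2 ≤ n)
    (hζ : IsPrimitiveRoot ζ n) (hα : α ≠ 0) (hc : c ∈ adjoin k A) (h : α ^ n = c)
    {τ : Gal(K/k)} (hA : ∀ y ∈ A, τ y = y) (hτα : τ α = algebraMap k K ζ * α)
    (hz : z ∈ adjoin k (insert α A)) (hτz : τ z = z) : z ∈ adjoin k A := by
  obtain ⟨hαint, hdeg⟩ := isIntegral_and_natDegree_minpoly_le (k := adjoin k A) (α := α)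
    (b := 0) (c := ⟨c, hc⟩) hn (by simpa using h)
  have hpow (i : ℕ) : (τ ^ i) α = algebraMap k K (ζ ^ i) * α := by
    induction i with
    | zero => simp
    | succ i ih =>
      rw [pow_succ', AlgEquiv.mul_apply, ih, map_mul, AlgEquiv.commutes, hτα, pow_succ, map_mul,
        mul_assoc]
  refine mem_adjoin_of_mem_adjoin_insert hαint hdeg hA (fun i hi j hj hij => ?_) hz hτz
  simp only [hpow] at hij
  exact hζ.pow_inj hi hj ((algebraMap k K).injective (mul_right_cancel₀ hα hij))

theorem mem_adjoin_of_artinSchreier (p : ℕ) [Fact p.Prime] [CharP K p] {A : Set K} {α c z : K}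
    (hc : c ∈ adjoin k A) (h : α ^ p - α = c)
    {τ : Gal(K/k)} (hA : ∀ y ∈ A, τ y = y) (hτα : τ α = α - 1)
    (hz : z ∈ adjoin k (insert α A)) (hτz : τ z = z) : z ∈ adjoin k A := by
  obtain ⟨hαint, hdeg⟩ := isIntegral_and_natDegree_minpoly_le (k := adjoin k A) (α := α)
    (b := 1) (c := ⟨c, hc⟩) (Fact.out : p.Prime).two_le (by simp [← h])
  have hpow (i : ℕ) : (τ ^ i) α = α - i := by
    induction i with
    | zero => simp
    | succ i ih =>
      rw [pow_succ', AlgEquiv.mul_apply, ih, map_sub, map_natCast, hτα]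
      push_cast
      ring
  refine mem_adjoin_of_mem_adjoin_insert hαint hdeg hA (fun i hi j hj hij => ?_) hz hτz
  simp only [hpow] at hij
  exact CharP.natCast_injOn_Iio K p hi hj (sub_right_injective hij)

end Descent

section Moments

variable {F K : Type*} [Field F] [Fintype F] [Field K] [Algebra F K]

/-- The mean of the elements of a finite field `F` with weights `x`; it is meant for weights of
nonzero sum. -/
noncomputable def weightedMean (x : F → K) : K :=
  (∑ i, algebraMap F K i * x i) / ∑ i, x i

/-- The `m`-th moment of the weights `x` about their mean, not divided by the total weight. -/
noncomputable def centralMoment (x : F → K) (m : ℕ) : K :=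
  ∑ i, (algebraMap F K i - weightedMean x) ^ m * x i

/-- The value `∏ c : F, (μ - c)` of the Artin–Schreier polynomial of `F` at the mean `μ`, an
invariant of the translations of the weights. -/
noncomputable def artinSchreierMean (x : F → K) : K :=
  weightedMean x ^ Fintype.card F - weightedMean x

/-- The central moments rescaled so as to be invariant under all affine reindexings of the
weights. -/
noncomputable def normalizedMoment (x : F → K) (m : ℕ) : K :=
  centralMoment x m / artinSchreierMean x ^ m

theorem centralMoment_one {x : F → K} (hx : ∑ i, x i ≠ 0) : centralMoment x 1 = 0 := by
  simp only [centralMoment, weightedMean, pow_one, sub_mul, Finset.sum_sub_distrib,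
    ← Finset.mul_sum]
  rw [div_mul_cancel₀ _ hx, sub_self]

theorem sum_sub_pow_card_sub_one_mul (x : F → K) (j : F) :
    ∑ i, algebraMap F K (i - j) ^ (Fintype.card F - 1) * x i = ∑ i, x i - x j := by
  classical
  have hδ (i : F) : algebraMap F K (i - j) ^ (Fintype.card F - 1) * x i =
      x i - if i = j then x j else 0 := by
    rcases eq_or_ne i j with rfl | hij
    · simp [Nat.sub_ne_zero_of_lt Fintype.one_lt_card]
    · rw [← map_pow, FiniteField.pow_card_sub_one_eq_one _ (sub_ne_zero.2 hij), map_one, one_mul,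
        if_neg hij, sub_zero]
  simp only [hδ, Finset.sum_sub_distrib, Finset.sum_ite_eq', Finset.mem_univ, if_true]

theorem sum_sub_pow_mul_eq_sum_centralMoment (x : F → K) (j : F) (n : ℕ) :
    ∑ i, algebraMap F K (i - j) ^ n * x i = ∑ m ∈ Finset.range (n + 1),
      centralMoment x m * (weightedMean x - algebraMap F K j) ^ (n - m) * n.choose m := by
  have hbinom (i : F) : algebraMap F K (i - j) ^ n = ∑ m ∈ Finset.range (n + 1),
      (algebraMap F K i - weightedMean x) ^ m *
        (weightedMean x - algebraMap F K j) ^ (n - m) * n.choose m := by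
    rw [← add_pow, map_sub, sub_add_sub_cancel]
  simp only [hbinom, centralMoment, Finset.sum_mul]
  rw [Finset.sum_comm]
  refine Finset.sum_congr rfl fun m _ => Finset.sum_congr rfl fun i _ => ?_
  ring

theorem apply_mem_of_weightedMean_mem {k : Type*} [Field k] [Algebra k K] [Algebra F k]
    [IsScalarTower F k K] {E : IntermediateField k K} {x : F → K} (hx : ∑ i, x i ≠ 0)
    (hmean : weightedMean x ∈ E)
    (hmoment : ∀ m < Fintype.card F, m ≠ 1 → centralMoment x m ∈ E) (j : F) : x j ∈ E := by
  have hF (i : F) : algebraMap F K i ∈ E := by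
    rw [IsScalarTower.algebraMap_apply F k K]
    exact E.algebraMap_mem _
  have hall (m : ℕ) (hm : m < Fintype.card F) : centralMoment x m ∈ E := by
    rcases eq_or_ne m 1 with rfl | hm1
    · rw [centralMoment_one hx]
      exact zero_mem E
    · exact hmoment m hm hm1
  have hrecover : x j = centralMoment x 0 -
      ∑ i, algebraMap F K (i - j) ^ (Fintype.card F - 1) * x i := by
    rw [sum_sub_pow_card_sub_one_mul]
    simp [centralMoment]
  rw [hrecover, sum_sub_pow_mul_eq_sum_centralMoment, Nat.sub_add_cancel Fintype.card_pos]
  refine sub_mem (hall 0 Fintype.card_pos) (sum_mem fun m hm => ?_)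
  exact mul_mem (mul_mem (hall m (Finset.mem_range.1 hm)) (pow_mem (sub_mem hmean (hF j)) _))
    (natCast_mem E _)

end Moments

section AffineAction

variable {F k K : Type*} [Field F] [Field k] [Field K]
  [Algebra F k] [Algebra k K] [Algebra F K] [IsScalarTower F k K]
  {τ : Gal(K/k)} {a : Fˣ} {c : F} {x y : F → K}

/-- `τ` carries the family `x` to the family `y` reindexed along the affine permutation
`i ↦ a * i + c` of `F`. -/
def ActsAffinely (τ : Gal(K/k)) (a : Fˣ) (c : F) (x y : F → K) : Prop :=
  ∀ i, τ (x i) = y (a * i + c)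

theorem sum_mul_add [Fintype F] {M : Type*} [AddCommMonoid M] (a : Fˣ) (c : F) (f : F → M) :
    ∑ i, f (a * i + c) = ∑ i, f i :=
  Equiv.sum_comp ((Units.mulLeft a).trans (Equiv.addRight c)) f

theorem apply_algebraMap_of_isScalarTower (τ : Gal(K/k)) (i : F) :
    τ (algebraMap F K i) = algebraMap F K i := by
  rw [IsScalarTower.algebraMap_apply F k K, AlgEquiv.commutes]

namespace ActsAffinely

variable [Fintype F]

theorem map_weightedMean (h : ActsAffinely τ a c x y) (hy : ∑ i, y i ≠ 0) :
    τ (weightedMean x) = algebraMap F K ↑a⁻¹ * (weightedMean y - algebraMap F K c) := by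
  have hnum : ∑ i, algebraMap F K i * y (a * i + c) =
      algebraMap F K ↑a⁻¹ * (∑ i, algebraMap F K i * y i - algebraMap F K c * ∑ i, y i) := by
    rw [Finset.mul_sum, ← Finset.sum_sub_distrib, Finset.mul_sum,
      ← sum_mul_add a c fun j => algebraMap F K ↑a⁻¹ *
        (algebraMap F K j * y j - algebraMap F K c * y j)]
    refine Finset.sum_congr rfl fun i _ => ?_
    rw [← sub_mul, ← map_sub, ← mul_assoc, ← map_mul, add_sub_cancel_right,
      Units.inv_mul_cancel_left]
  simp only [weightedMean, map_div₀, map_sum, map_mul, apply_algebraMap_of_isScalarTower, h _]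
  rw [hnum, sum_mul_add a c y]
  field_simp

theorem map_centralMoment (h : ActsAffinely τ a c x y) (hy : ∑ i, y i ≠ 0) (m : ℕ) :
    τ (centralMoment x m) = algebraMap F K ↑a⁻¹ ^ m * centralMoment y m := by
  have hdev (i : F) :
      algebraMap F K i - algebraMap F K ↑a⁻¹ * (weightedMean y - algebraMap F K c) =
        algebraMap F K ↑a⁻¹ * (algebraMap F K (a * i + c) - weightedMean y) := by
    have ha : algebraMap F K ↑a⁻¹ * algebraMap F K a = 1 := by
      rw [← map_mul, Units.inv_mul, map_one]
    rw [map_add, map_mul]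
    linear_combination -(algebraMap F K i) * ha
  simp only [centralMoment, map_sum, map_mul, map_pow, map_sub,
    apply_algebraMap_of_isScalarTower, h _, h.map_weightedMean hy, hdev, mul_pow, mul_assoc]
  rw [← Finset.mul_sum, sum_mul_add a c fun j => (algebraMap F K j - weightedMean y) ^ m * y j]

theorem map_artinSchreierMean (h : ActsAffinely τ a c x y) (hy : ∑ i, y i ≠ 0) :
    τ (artinSchreierMean x) = algebraMap F K ↑a⁻¹ * artinSchreierMean y := by
  have hfrob : (weightedMean y - algebraMap F K c) ^ Fintype.card F =
      weightedMean y ^ Fintype.card F - algebraMap F K c := by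
    simpa using (FiniteField.frobeniusAlgHom F K).map_sub (weightedMean y) (algebraMap F K c)
  rw [artinSchreierMean, map_sub, map_pow, h.map_weightedMean hy, mul_pow, hfrob, ← map_pow,
    FiniteField.pow_card, artinSchreierMean]
  ring

theorem map_normalizedMoment (h : ActsAffinely τ a c x y) (hy : ∑ i, y i ≠ 0) (m : ℕ) :
    τ (normalizedMoment x m) = normalizedMoment y m := by
  rw [normalizedMoment, map_div₀, map_pow, h.map_centralMoment hy, h.map_artinSchreierMean hy,
    mul_pow, normalizedMoment]
  exact mul_div_mul_left _ _ (pow_ne_zero m ((map_ne_zero _).2 (Units.ne_zero _)))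

end ActsAffinely

end AffineAction

section Generators

open IntermediateField

variable {F k K : Type*} [Field F] [Fintype F] [Field k] [Field K] [Algebra F K] [Algebra k K]
  {x y : F → K} {e : ℕ}

/-- The mean and the central moments of degree `m < |F|`, a system of coordinates on the weights of
nonzero sum. The mean occupies the slot `m = 1`, where the central moment vanishes. -/
noncomputable def momentCoordinates (x : F → K) (m : Fin (Fintype.card F)) : K :=
  if (m : ℕ) = 1 then weightedMean x else centralMoment x m

/-- The ratio of the Artin–Schreier invariants of the means of two families of weights. -/
noncomputable def meanRatio (x y : F → K) : K :=
  artinSchreierMean x / artinSchreierMean y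

/-- The generators of the fixed field. Apart from the slots `m = 1`, which are filled by the trace
of `r = meanRatio x y` and by a norm, they are the traces of `C` and of `r * C` under
`r ↦ -r⁻¹`, `C ↔ D`, where `C` and `D` are the `m`-th normalized moments of `x` and `y`. -/
noncomputable def invariantGenerators (e : ℕ) (x y : F → K) :
    Fin (Fintype.card F) ⊕ Fin (Fintype.card F) → K :=
  Sum.elim
    (fun m => if (m : ℕ) = 1 then meanRatio x y - (meanRatio x y)⁻¹
      else normalizedMoment x m + normalizedMoment y m)
    (fun m => if (m : ℕ) = 1 then (artinSchreierMean x ^ 2 + artinSchreierMean y ^ 2) ^ e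
      else meanRatio x y * normalizedMoment x m - (meanRatio x y)⁻¹ * normalizedMoment y m)

/-- The genericity conditions on two families of weights under which none of the denominators
occurring in their invariants vanishes. -/
structure InGeneralPosition (x y : F → K) : Prop where
  sum_left_ne_zero : ∑ i, x i ≠ 0
  sum_right_ne_zero : ∑ i, y i ≠ 0
  left_ne_zero : artinSchreierMean x ≠ 0
  right_ne_zero : artinSchreierMean y ≠ 0
  sq_add_sq_ne_zero : artinSchreierMean x ^ 2 + artinSchreierMean y ^ 2 ≠ 0

section Generation

variable [Algebra F k] [IsScalarTower F k K]

theorem eq_top_of_momentCoordinates_mem (htop : adjoin k (Set.range (Sum.elim x y)) = ⊤)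
    (hx : ∑ i, x i ≠ 0) (hy : ∑ i, y i ≠ 0) {E : IntermediateField k K}
    (hEx : ∀ m, momentCoordinates x m ∈ E) (hEy : ∀ m, momentCoordinates y m ∈ E) : E = ⊤ := by
  have hrecover {w : F → K} (hw : ∑ i, w i ≠ 0) (hE : ∀ m, momentCoordinates w m ∈ E) (i : F) :
      w i ∈ E := by
    refine apply_mem_of_weightedMean_mem hw ?_ (fun m hm hm1 => ?_) i
    · simpa only [momentCoordinates, if_true] using hE ⟨1, Fintype.one_lt_card⟩
    · simpa only [momentCoordinates, if_neg hm1] using hE ⟨m, hm⟩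
  rw [← top_le_iff, ← htop, adjoin_le_iff]
  rintro _ ⟨i | i, rfl⟩
  exacts [hrecover hx hEx i, hrecover hy hEy i]

theorem algebraicIndependent_weightedMean (hind : AlgebraicIndependent k (Sum.elim x y))
    (htop : adjoin k (Set.range (Sum.elim x y)) = ⊤) :
    AlgebraicIndependent k ![weightedMean x, weightedMean y] := by
  let ε := Fintype.equivFin F
  let g := Sum.elim (momentCoordinates x) (momentCoordinates y)
  have hgen : adjoin k (Set.range g) = ⊤ :=
    eq_top_of_momentCoordinates_mem htop
      (sum_ne_zero_of_algebraicIndependent (hind.comp inl Sum.inl_injective))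
      (sum_ne_zero_of_algebraicIndependent (hind.comp inr Sum.inr_injective))
      (fun m => subset_adjoin k _ ⟨inl m, rfl⟩) (fun m => subset_adjoin k _ ⟨inr m, rfl⟩)
  have : Algebra.IsAlgebraic (adjoin k (Set.range g)) K := by
    rw [hgen]
    exact ⟨fun z => isAlgebraic_algebraMap (⟨z, mem_top⟩ : (⊤ : IntermediateField k K))⟩
  have hg : AlgebraicIndependent k g :=
    algebraicIndependent_of_isAlgebraic_adjoin_range
      (hind.comp _ (Equiv.sumCongr ε.symm ε.symm).injective)
  let one : Fin (Fintype.card F) := ⟨1, Fintype.one_lt_card⟩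
  have hmeans : ![weightedMean x, weightedMean y] = g ∘ ![inl one, inr one] := by
    ext i
    fin_cases i <;> simp [g, one, momentCoordinates]
  rw [hmeans]
  exact hg.comp _ (by simp [Function.Injective, Fin.forall_fin_two])

theorem inGeneralPosition_of_algebraicIndependent (hind : AlgebraicIndependent k (Sum.elim x y))
    (htop : adjoin k (Set.range (Sum.elim x y)) = ⊤) : InGeneralPosition x y where
  sum_left_ne_zero := sum_ne_zero_of_algebraicIndependent (hind.comp inl Sum.inl_injective)
  sum_right_ne_zero := sum_ne_zero_of_algebraicIndependent (hind.comp inr Sum.inr_injective)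
  left_ne_zero := pow_sub_self_ne_zero
    ((algebraicIndependent_weightedMean hind htop).transcendental 0) Fintype.one_lt_card
  right_ne_zero := pow_sub_self_ne_zero
    ((algebraicIndependent_weightedMean hind htop).transcendental 1) Fintype.one_lt_card
  sq_add_sq_ne_zero := pow_sub_self_sq_add_sq_ne_zero
    (algebraicIndependent_weightedMean hind htop) Fintype.one_lt_card

end Generation

namespace InGeneralPosition

theorem meanRatio_ne_zero (h : InGeneralPosition x y) : meanRatio x y ≠ 0 :=
  div_ne_zero h.left_ne_zero h.right_ne_zero

theorem meanRatio_mul (h : InGeneralPosition x y) :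
    meanRatio x y * artinSchreierMean y = artinSchreierMean x :=
  div_mul_cancel₀ _ h.right_ne_zero

theorem meanRatio_sq_add_one_mul (h : InGeneralPosition x y) :
    (meanRatio x y ^ 2 + 1) * artinSchreierMean y ^ 2 =
      artinSchreierMean x ^ 2 + artinSchreierMean y ^ 2 := by
  rw [← h.meanRatio_mul]
  ring

theorem meanRatio_sq_add_one_ne_zero (h : InGeneralPosition x y) : meanRatio x y ^ 2 + 1 ≠ 0 :=
  left_ne_zero_of_mul (h.meanRatio_sq_add_one_mul ▸ h.sq_add_sq_ne_zero)

theorem meanRatio_sq (h : InGeneralPosition x y) :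
    meanRatio x y ^ 2 = (meanRatio x y - (meanRatio x y)⁻¹) * meanRatio x y + 1 := by
  rw [sub_mul, inv_mul_cancel₀ h.meanRatio_ne_zero]
  ring

theorem artinSchreierMean_pow (h : InGeneralPosition x y) (e : ℕ) :
    artinSchreierMean y ^ (2 * e) =
      (artinSchreierMean x ^ 2 + artinSchreierMean y ^ 2) ^ e / (meanRatio x y ^ 2 + 1) ^ e := by
  rw [pow_mul, ← div_pow, ← h.meanRatio_sq_add_one_mul,
    mul_div_cancel_left₀ _ h.meanRatio_sq_add_one_ne_zero]

theorem normalizedMoment_left_eq (h : InGeneralPosition x y) (m : ℕ) :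
    normalizedMoment x m = (meanRatio x y *
        (meanRatio x y * normalizedMoment x m - (meanRatio x y)⁻¹ * normalizedMoment y m) +
      (normalizedMoment x m + normalizedMoment y m)) / (meanRatio x y ^ 2 + 1) := by
  rw [eq_div_iff h.meanRatio_sq_add_one_ne_zero, mul_sub, mul_inv_cancel_left₀ h.meanRatio_ne_zero]
  ring

end InGeneralPosition

variable {E : IntermediateField k K}

theorem trace_meanRatio_mem (hE : ∀ v, invariantGenerators e x y v ∈ E) :
    meanRatio x y - (meanRatio x y)⁻¹ ∈ E := by
  simpa [invariantGenerators] using hE (inl ⟨1, Fintype.one_lt_card⟩)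

theorem artinSchreierMean_pow_mem (h : InGeneralPosition x y)
    (hE : ∀ v, invariantGenerators e x y v ∈ E) (hr : meanRatio x y ∈ E) :
    artinSchreierMean y ^ (2 * e) ∈ E := by
  rw [h.artinSchreierMean_pow]
  have hnorm : (artinSchreierMean x ^ 2 + artinSchreierMean y ^ 2) ^ e ∈ E := by
    simpa [invariantGenerators] using hE (inr ⟨1, Fintype.one_lt_card⟩)
  exact div_mem hnorm (pow_mem (add_mem (pow_mem hr 2) (one_mem E)) e)

theorem normalizedMoment_mem (h : InGeneralPosition x y)
    (hE : ∀ v, invariantGenerators e x y v ∈ E) (hr : meanRatio x y ∈ E)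
    {m : ℕ} (hm : m < Fintype.card F) (hm1 : m ≠ 1) :
    normalizedMoment x m ∈ E ∧ normalizedMoment y m ∈ E := by
  have hsum : normalizedMoment x m + normalizedMoment y m ∈ E := by
    simpa [invariantGenerators, hm1] using hE (inl ⟨m, hm⟩)
  have htwisted : meanRatio x y * normalizedMoment x m -
      (meanRatio x y)⁻¹ * normalizedMoment y m ∈ E := by
    simpa [invariantGenerators, hm1] using hE (inr ⟨m, hm⟩)
  have hx : normalizedMoment x m ∈ E := by
    rw [h.normalizedMoment_left_eq]
    exact div_mem (add_mem (mul_mem hr htwisted) hsum) (add_mem (pow_mem hr 2) (one_mem E))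
  exact ⟨hx, by simpa using sub_mem hsum hx⟩

variable [Algebra F k] [IsScalarTower F k K]

theorem eq_top_of_invariantGenerators_mem (h : InGeneralPosition x y)
    (htop : adjoin k (Set.range (Sum.elim x y)) = ⊤)
    (hE : ∀ v, invariantGenerators e x y v ∈ E) (hr : meanRatio x y ∈ E)
    (hT : artinSchreierMean y ∈ E) (hμx : weightedMean x ∈ E) (hμy : weightedMean y ∈ E) :
    E = ⊤ := by
  have hcoord {w : F → K} (hw : artinSchreierMean w ≠ 0) (hwE : artinSchreierMean w ∈ E)
      (hμ : weightedMean w ∈ E)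
      (hmom : ∀ m < Fintype.card F, m ≠ 1 → normalizedMoment w m ∈ E)
      (m : Fin (Fintype.card F)) : momentCoordinates w m ∈ E := by
    rw [momentCoordinates]
    split_ifs with hm
    · exact hμ
    · rw [← div_mul_cancel₀ (centralMoment w m) (pow_ne_zero m hw)]
      exact mul_mem (hmom m m.2 hm) (pow_mem hwE m)
  refine eq_top_of_momentCoordinates_mem htop h.sum_left_ne_zero h.sum_right_ne_zero
    (hcoord h.left_ne_zero ?_ hμx fun m hm hm1 => (normalizedMoment_mem h hE hr hm hm1).1)
    (hcoord h.right_ne_zero hT hμy fun m hm hm1 => (normalizedMoment_mem h hE hr hm hm1).2)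
  rw [← h.meanRatio_mul]
  exact mul_mem hr hT

theorem algebraicIndependent_invariantGenerators (he : e ≠ 0)
    (hind : AlgebraicIndependent k (Sum.elim x y))
    (htop : adjoin k (Set.range (Sum.elim x y)) = ⊤) :
    AlgebraicIndependent k (invariantGenerators e x y) := by
  have h := inGeneralPosition_of_algebraicIndependent hind htop
  let B := adjoin k (Set.range (invariantGenerators e x y))
  let E := (algebraicClosure B K).restrictScalars k
  have hE (v) : invariantGenerators e x y v ∈ E :=
    (algebraicClosure B K).algebraMap_mem ⟨_, subset_adjoin k _ ⟨v, rfl⟩⟩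
  have hr : meanRatio x y ∈ E :=
    mem_algebraicClosure_of_pow_eq le_rfl (trace_meanRatio_mem hE) (one_mem E) h.meanRatio_sq
  have hT : artinSchreierMean y ∈ E :=
    mem_algebraicClosure_of_pow_eq (n := 2 * e) (by lia) (zero_mem E)
      (artinSchreierMean_pow_mem h hE hr) (by simp)
  have hμ {w : F → K} (hw : artinSchreierMean w ∈ E) : weightedMean w ∈ E :=
    mem_algebraicClosure_of_pow_eq Fintype.one_lt_card (one_mem E) hw
      (by rw [artinSchreierMean, one_mul, add_sub_cancel])
  have hEtop : E = ⊤ :=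
    eq_top_of_invariantGenerators_mem h htop hE hr hT
      (hμ (h.meanRatio_mul ▸ mul_mem hr hT)) (hμ hT)
  have : Algebra.IsAlgebraic B K := ⟨fun z => by
    have hz : z ∈ E := hEtop ▸ mem_top
    exact mem_algebraicClosure_iff.1 hz⟩
  let ε := Fintype.equivFin F
  exact algebraicIndependent_of_isAlgebraic_adjoin_range
    (hind.comp _ (Equiv.sumCongr ε.symm ε.symm).injective)

end Generators

section Invariance

variable {F k K : Type*} [Field F] [Fintype F] [Field k] [Field K]
  [Algebra F k] [Algebra k K] [Algebra F K] [IsScalarTower F k K]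
  {τ : Gal(K/k)} {a : Fˣ} {c c' : F} {x y : F → K} {e : ℕ}

namespace InGeneralPosition

theorem map_meanRatio (h : InGeneralPosition x y) (hx : ActsAffinely τ a c x x)
    (hy : ActsAffinely τ a c' y y) : τ (meanRatio x y) = meanRatio x y := by
  rw [meanRatio, map_div₀, hx.map_artinSchreierMean h.sum_left_ne_zero,
    hy.map_artinSchreierMean h.sum_right_ne_zero]
  exact mul_div_mul_left _ _ ((map_ne_zero _).2 (Units.ne_zero _))

theorem map_invariantGenerators (h : InGeneralPosition x y) (hx : ActsAffinely τ a c x x)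
    (hy : ActsAffinely τ a c' y y) (ha : a ^ (2 * e) = 1)
    (v : Fin (Fintype.card F) ⊕ Fin (Fintype.card F)) :
    τ (invariantGenerators e x y v) = invariantGenerators e x y v := by
  have hnorm : τ ((artinSchreierMean x ^ 2 + artinSchreierMean y ^ 2) ^ e) =
      (artinSchreierMean x ^ 2 + artinSchreierMean y ^ 2) ^ e := by
    have hscale : (algebraMap F K ↑a⁻¹ ^ 2) ^ e = 1 := by
      rw [← pow_mul, ← map_pow, ← Units.val_pow_eq_pow_val, inv_pow, ha, inv_one, Units.val_one,
        map_one]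
    rw [map_pow, map_add, map_pow, map_pow, hx.map_artinSchreierMean h.sum_left_ne_zero,
      hy.map_artinSchreierMean h.sum_right_ne_zero, mul_pow, mul_pow, ← mul_add, mul_pow, hscale,
      one_mul]
  rcases v with m | m <;> by_cases hm : (m : ℕ) = 1 <;>
    simp [invariantGenerators, hm, h.map_meanRatio hx hy, hnorm,
      hx.map_normalizedMoment h.sum_left_ne_zero, hy.map_normalizedMoment h.sum_right_ne_zero]

theorem map_meanRatio_of_swap (h : InGeneralPosition x y) (hx : ActsAffinely τ (-1) c x y)
    (hy : ActsAffinely τ 1 c' y x) : τ (meanRatio x y) = -(meanRatio x y)⁻¹ := by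
  rw [meanRatio, map_div₀, hx.map_artinSchreierMean h.sum_right_ne_zero,
    hy.map_artinSchreierMean h.sum_left_ne_zero, inv_div]
  simp [neg_div]

theorem map_invariantGenerators_of_swap (h : InGeneralPosition x y)
    (hx : ActsAffinely τ (-1) c x y) (hy : ActsAffinely τ 1 c' y x)
    (v : Fin (Fintype.card F) ⊕ Fin (Fintype.card F)) :
    τ (invariantGenerators e x y v) = invariantGenerators e x y v := by
  have hnorm : τ ((artinSchreierMean x ^ 2 + artinSchreierMean y ^ 2) ^ e) =
      (artinSchreierMean x ^ 2 + artinSchreierMean y ^ 2) ^ e := by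
    simp [hx.map_artinSchreierMean h.sum_right_ne_zero,
      hy.map_artinSchreierMean h.sum_left_ne_zero, add_comm]
  rcases v with m | m <;> by_cases hm : (m : ℕ) = 1 <;>
    simp [invariantGenerators, hm, h.map_meanRatio_of_swap hx hy, hnorm,
      hx.map_normalizedMoment h.sum_right_ne_zero, hy.map_normalizedMoment h.sum_left_ne_zero]
  all_goals ring

end InGeneralPosition

end Invariance

section FixedField

open IntermediateField

/-- The automorphisms `σ₁`, `σ₂`, `l`, `ρ` permute the variables `x` and `y` as the translation of
`x`, the translation of `y`, the map `x_i ↦ y_{-i}`, `y_i ↦ x_i` and the simultaneous dilation by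
`a`, respectively. -/
structure PermutesVariables {F k K : Type*} [Field F] [Field k] [Field K] [Algebra k K]
    (a : Fˣ) (σ₁ σ₂ l ρ : Gal(K/k)) (x y : F → K) : Prop where
  translation_left : ActsAffinely σ₁ 1 1 x x
  translation_left_fix : ActsAffinely σ₁ 1 0 y y
  translation_right_fix : ActsAffinely σ₂ 1 0 x x
  translation_right : ActsAffinely σ₂ 1 1 y y
  swap_left : ActsAffinely l (-1) 0 x y
  swap_right : ActsAffinely l 1 0 y x
  dilation_left : ActsAffinely ρ a 0 x x
  dilation_right : ActsAffinely ρ a 0 y y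

namespace PermutesVariables

theorem neg {F k K : Type*} [Field F] [Field k] [Field K] [Algebra k K]
    {a : Fˣ} {σ₁ σ₂ l ρ : Gal(K/k)} {x y : F → K} (h : PermutesVariables a σ₁ σ₂ l ρ x y) :
    PermutesVariables (-a) σ₁ σ₂ l (ρ * l * l) x y where
  __ := h
  dilation_left i := by
    simp [h.swap_left i, h.swap_right (-i), h.dilation_left (-i)]
  dilation_right i := by
    simp [h.swap_right i, h.swap_left i, h.dilation_right (-i)]

variable {k K : Type*} [Field k] [Field K] [Algebra k K] {p : ℕ} [Fact p.Prime]
  [Algebra (ZMod p) k] [Algebra (ZMod p) K] [IsScalarTower (ZMod p) k K]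
  {x y : ZMod p → K} {e : ℕ} {a : (ZMod p)ˣ} {σ₁ σ₂ l ρ : Gal(K/k)}

theorem mem_adjoin_of_translations (h : PermutesVariables a σ₁ σ₂ l ρ x y)
    (hxy : InGeneralPosition x y) (htop : adjoin k (Set.range (Sum.elim x y)) = ⊤)
    {z : K} (hσ₁ : σ₁ z = z) (hσ₂ : σ₂ z = z) :
    z ∈ adjoin k (insert (artinSchreierMean y)
      (insert (meanRatio x y) (Set.range (invariantGenerators e x y)))) := by
  have : CharP K p := charP_of_injective_algebraMap (algebraMap (ZMod p) K).injective p
  set A := insert (artinSchreierMean y)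
    (insert (meanRatio x y) (Set.range (invariantGenerators e x y)))
  have hTA : artinSchreierMean y ∈ A := .inl rfl
  have hrA : meanRatio x y ∈ A := .inr (.inl rfl)
  have hgA (v) : invariantGenerators e x y v ∈ A := .inr (.inr ⟨v, rfl⟩)
  have hfix {τ : Gal(K/k)} {c c' : ZMod p} (hx : ActsAffinely τ 1 c x x)
      (hy : ActsAffinely τ 1 c' y y) : ∀ w ∈ A, τ w = w := by
    rintro _ (rfl | rfl | ⟨v, rfl⟩)
    · simpa using hy.map_artinSchreierMean hxy.sum_right_ne_zero
    · exact hxy.map_meanRatio hx hy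
    · exact hxy.map_invariantGenerators hx hy (one_pow _) v
  have hμx : weightedMean x ^ p - weightedMean x = artinSchreierMean x := by
    rw [artinSchreierMean, ZMod.card]
  have hμy : weightedMean y ^ p - weightedMean y = artinSchreierMean y := by
    rw [artinSchreierMean, ZMod.card]
  have hztop : z ∈ adjoin k (insert (weightedMean y) (insert (weightedMean x) A)) := by
    have hmem {w : K} (hw : w ∈ A) := subset_adjoin k
      (insert (weightedMean y) (insert (weightedMean x) A)) (.inr (.inr hw))
    rw [eq_top_of_invariantGenerators_mem hxy htop (fun v => hmem (hgA v)) (hmem hrA) (hmem hTA)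
      (subset_adjoin k _ (.inr (.inl rfl))) (subset_adjoin k _ (.inl rfl))]
    exact mem_top
  have hzx : z ∈ adjoin k (insert (weightedMean x) A) := by
    refine mem_adjoin_of_artinSchreier p (subset_adjoin k _ (.inr hTA)) hμy ?_ ?_ hztop hσ₂
    · rintro _ (rfl | hw)
      · simpa using h.translation_right_fix.map_weightedMean hxy.sum_left_ne_zero
      · exact hfix h.translation_right_fix h.translation_right _ hw
    · simpa using h.translation_right.map_weightedMean hxy.sum_right_ne_zero
  refine mem_adjoin_of_artinSchreier p ?_ hμx (hfix h.translation_left h.translation_left_fix) ?_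
    hzx hσ₁
  · rw [← hxy.meanRatio_mul]
    exact mul_mem (subset_adjoin k _ hrA) (subset_adjoin k _ hTA)
  · simpa using h.translation_left.map_weightedMean hxy.sum_left_ne_zero

theorem mem_adjoin_of_dilation (h : PermutesVariables a σ₁ σ₂ l ρ x y)
    (hxy : InGeneralPosition x y) (he : e ≠ 0) (ha : orderOf a = 2 * e) {z : K}
    (hz : z ∈ adjoin k (insert (artinSchreierMean y)
      (insert (meanRatio x y) (Set.range (invariantGenerators e x y)))))
    (hρ : ρ z = z) :
    z ∈ adjoin k (insert (meanRatio x y) (Set.range (invariantGenerators e x y))) := by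
  have hζ : IsPrimitiveRoot (algebraMap (ZMod p) k ↑a⁻¹) (2 * e) :=
    (IsPrimitiveRoot.coe_units_iff.2
      ((orderOf_inv a).trans ha ▸ IsPrimitiveRoot.orderOf a⁻¹)).map_of_injective
        (algebraMap (ZMod p) k).injective
  refine mem_adjoin_of_kummer (by lia) hζ hxy.right_ne_zero
    (artinSchreierMean_pow_mem hxy (fun v => subset_adjoin k _ (.inr ⟨v, rfl⟩))
      (subset_adjoin k _ (.inl rfl))) rfl ?_ ?_ hz hρ
  · rintro _ (rfl | ⟨v, rfl⟩)
    · exact hxy.map_meanRatio h.dilation_left h.dilation_right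
    · exact hxy.map_invariantGenerators h.dilation_left h.dilation_right
        (ha ▸ pow_orderOf_eq_one a) v
  · rw [h.dilation_right.map_artinSchreierMean hxy.sum_right_ne_zero,
      IsScalarTower.algebraMap_apply (ZMod p) k K]

theorem mem_adjoin_of_swap (h : PermutesVariables a σ₁ σ₂ l ρ x y)
    (hxy : InGeneralPosition x y) {z : K}
    (hz : z ∈ adjoin k (insert (meanRatio x y) (Set.range (invariantGenerators e x y))))
    (hl : l z = z) : z ∈ adjoin k (Set.range (invariantGenerators e x y)) := by
  have hmoves : l (meanRatio x y) ≠ meanRatio x y := by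
    rw [hxy.map_meanRatio_of_swap h.swap_left h.swap_right]
    intro hneg
    refine hxy.meanRatio_sq_add_one_ne_zero ?_
    linear_combination (-meanRatio x y) * hneg - mul_inv_cancel₀ hxy.meanRatio_ne_zero
  refine mem_adjoin_of_quadratic (trace_meanRatio_mem fun v => subset_adjoin k _ ⟨v, rfl⟩)
    (one_mem _) hxy.meanRatio_sq ?_ hmoves hz hl
  rintro _ ⟨v, rfl⟩
  exact hxy.map_invariantGenerators_of_swap h.swap_left h.swap_right v

theorem fixedField_eq_adjoin (h : PermutesVariables a σ₁ σ₂ l ρ x y)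
    (hxy : InGeneralPosition x y) (htop : adjoin k (Set.range (Sum.elim x y)) = ⊤)
    (he : e ≠ 0) (ha : orderOf a = 2 * e) :
    fixedField (Subgroup.closure {σ₁, σ₂, l, ρ}) =
      adjoin k (Set.range (invariantGenerators e x y)) := by
  refine le_antisymm (fun z hz => ?_) (adjoin_le_iff.2 ?_)
  · have hfix := mem_fixedField_closure_iff.1 hz
    have hT := h.mem_adjoin_of_translations (e := e) hxy htop (hfix σ₁ (by simp))
      (hfix σ₂ (by simp))
    have hr := h.mem_adjoin_of_dilation hxy he ha hT (hfix ρ (by simp))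
    exact h.mem_adjoin_of_swap hxy hr (hfix l (by simp))
  · rintro _ ⟨v, rfl⟩
    refine mem_fixedField_closure_iff.2 ?_
    rintro τ (rfl | rfl | rfl | rfl)
    · exact hxy.map_invariantGenerators h.translation_left h.translation_left_fix (one_pow _) v
    · exact hxy.map_invariantGenerators h.translation_right_fix h.translation_right (one_pow _) v
    · exact hxy.map_invariantGenerators_of_swap h.swap_left h.swap_right v
    · exact hxy.map_invariantGenerators h.dilation_left h.dilation_right
        (ha ▸ pow_orderOf_eq_one a) v

theorem isKRational_fixedField_of_even_orderOf (h : PermutesVariables a σ₁ σ₂ l ρ x y)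
    (hind : AlgebraicIndependent k (Sum.elim x y))
    (htop : adjoin k (Set.range (Sum.elim x y)) = ⊤) (ha : Even (orderOf a)) :
    IsKRational k (fixedField (Subgroup.closure {σ₁, σ₂, l, ρ})) := by
  obtain ⟨e, he⟩ := ha.two_dvd
  have he0 : e ≠ 0 := right_ne_zero_of_mul (he ▸ (orderOf_pos a).ne')
  rw [h.fixedField_eq_adjoin (inGeneralPosition_of_algebraicIndependent hind htop) htop he0 he]
  exact isKRational_adjoin_range (algebraicIndependent_invariantGenerators he0 hind htop)

end PermutesVariables

theorem even_orderOf_or_even_orderOf_neg {R : Type*} [Ring R] (hR : (-1 : R) ≠ 1) (a : Rˣ) :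
    Even (orderOf a) ∨ Even (orderOf (-a)) := by
  by_contra! h
  simp only [Nat.not_even_iff_odd] at h
  have hpow : (-a) ^ (orderOf a * orderOf (-a)) = -1 := by
    rw [(h.1.mul h.2).neg_pow, pow_mul, pow_orderOf_eq_one, one_pow]
  rw [mul_comm, pow_mul, pow_orderOf_eq_one, one_pow] at hpow
  exact hR (by simpa using (congrArg Units.val hpow).symm)

theorem fixedField_closure_mul_mul {k K : Type*} [Field k] [Field K] [Algebra k K]
    (σ₁ σ₂ l ρ : Gal(K/k)) :
    fixedField (Subgroup.closure {σ₁, σ₂, l, ρ * l * l}) =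
      fixedField (Subgroup.closure {σ₁, σ₂, l, ρ}) := by
  ext z
  rw [mem_fixedField_closure_iff, mem_fixedField_closure_iff]
  simp +contextual

end FixedField

theorem stmt8_general (k : Type*) [Field k] (p : ℕ) (hp : p.Prime) (hodd : Odd p) [CharP k p]
    (K : Type*) [Field K] [Algebra k K] (a : (ZMod p)ˣ) (X : (ZMod p ⊕ ZMod p) → K)
    (hind : AlgebraicIndependent k X) (htop : IntermediateField.adjoin k (Set.range X) = ⊤)
    (σ₁ σ₂ l₁ ρ : K ≃ₐ[k] K)
    (hσ₁ : ∀ i : ZMod p, σ₁ (X (inl i)) = X (inl (i + 1)) ∧ σ₁ (X (inr i)) = X (inr i))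
    (hσ₂ : ∀ i : ZMod p, σ₂ (X (inl i)) = X (inl i) ∧ σ₂ (X (inr i)) = X (inr (i + 1)))
    (hl₁ : ∀ i : ZMod p, l₁ (X (inl i)) = X (inr (-i)) ∧ l₁ (X (inr i)) = X (inl i))
    (hρ : ∀ i : ZMod p, ρ (X (inl i)) = X (inl ((a : ZMod p) * i)) ∧
      ρ (X (inr i)) = X (inr ((a : ZMod p) * i))) :
    IsKRational k
      (IntermediateField.fixedField (Subgroup.closure {σ₁, σ₂, l₁, ρ})) := by
  have : Fact p.Prime := ⟨hp⟩
  have : CharP K p := charP_of_injective_algebraMap (algebraMap k K).injective p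
  let _ : Algebra (ZMod p) k := ZMod.algebra k p
  let _ : Algebra (ZMod p) K := ZMod.algebra K p
  have : IsScalarTower (ZMod p) k K := .of_algebraMap_eq' (Subsingleton.elim _ _)
  have : Fact (2 < p) := ⟨hp.two_le.lt_of_ne' (hodd.ne_two_of_dvd_nat dvd_rfl)⟩
  rw [← Sum.elim_comp_inl_inr X] at hind htop
  have hG : PermutesVariables a σ₁ σ₂ l₁ ρ (X ∘ inl) (X ∘ inr) := by
    constructor <;> intro i <;> simp [hσ₁, hσ₂, hl₁, hρ]
  rcases even_orderOf_or_even_orderOf_neg ZMod.neg_one_ne_one a with ha | ha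
  · exact hG.isKRational_fixedField_of_even_orderOf hind htop ha
  · rw [← fixedField_closure_mul_mul]
    exact hG.neg.isKRational_fixedField_of_even_orderOf hind htop ha

/-- for `p` an odd prime, `char k = p`, and `a` generating
`(ℤ/pℤ)ˣ`, the fixed field of `G = ⟨σ₁, σ₂, λ₁, ρ₁ρ₂⟩` acting on
`k(x₀,…,x_{p-1}, y₀,…,y_{p-1})` by permuting the variables
(`σ₁ : x_i ↦ x_{i+1}`, `σ₂ : y_i ↦ y_{i+1}`, `λ₁ : x_i ↦ y_{-i}, y_i ↦ x_i`,
`ρ₁ρ₂ : x_i ↦ x_{ai}, y_i ↦ y_{ai}`) is purely transcendental over `k`. -/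
theorem stmt8 (k : Type*) [Field k] (p : ℕ) (hp : p.Prime) (hodd : Odd p) [CharP k p]
    (a : (ZMod p)ˣ) (hgen : ∀ u : (ZMod p)ˣ, u ∈ Subgroup.zpowers a)
    (X : (ZMod p ⊕ ZMod p) → FractionRing (MvPolynomial (ZMod p ⊕ ZMod p) k))
    (hX : ∀ v, X v = algebraMap (MvPolynomial (ZMod p ⊕ ZMod p) k)
      (FractionRing (MvPolynomial (ZMod p ⊕ ZMod p) k)) (MvPolynomial.X v))
    (σ₁ σ₂ l₁ ρ : FractionRing (MvPolynomial (ZMod p ⊕ ZMod p) k) ≃ₐ[k]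
      FractionRing (MvPolynomial (ZMod p ⊕ ZMod p) k))
    (hσ₁ : ∀ i : ZMod p, σ₁ (X (inl i)) = X (inl (i + 1)) ∧ σ₁ (X (inr i)) = X (inr i))
    (hσ₂ : ∀ i : ZMod p, σ₂ (X (inl i)) = X (inl i) ∧ σ₂ (X (inr i)) = X (inr (i + 1)))
    (hl₁ : ∀ i : ZMod p, l₁ (X (inl i)) = X (inr (-i)) ∧ l₁ (X (inr i)) = X (inl i))
    (hρ : ∀ i : ZMod p, ρ (X (inl i)) = X (inl ((a : ZMod p) * i)) ∧
      ρ (X (inr i)) = X (inr ((a : ZMod p) * i))) :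
    IsKRational k
      (IntermediateField.fixedField (Subgroup.closure {σ₁, σ₂, l₁, ρ})) := by
  obtain rfl : X = fun v => algebraMap _ _ (MvPolynomial.X v) := funext hX
  exact stmt8_general k p hp hodd _ a _ (algebraicIndependent_algebraMap_X k _)
    (adjoin_range_algebraMap_X_eq_top k _) σ₁ σ₂ l₁ ρ hσ₁ hσ₂ hl₁ hρ
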